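/- Let (V_•, d_•) be a finite-dimensional Hilbert complex of length n, and for λ ∈ ℝ let E_k(λ) denote the eigenspace of Δ_k for the eigenvalue λ. Then d_k maps E_k(λ) into E_{k+1}(λ) for every λ; and if λ ≠ 0, then d_k restricts to a linear isomorphism from E_k(λ) ∩ ran(d_k†) onto E_{k+1}(λ) ∩ ran(d_k), so that these two subspaces have equal dimension. -/

import Mathlib

/-!
Statement 12: for a finite-dimensional Hilbert complex `(V, d)`, the differential `d_k` maps
the eigenspace `E_k(λ)` of `Δ_k` into `E_{k+1}(λ)`, and for `λ ≠ 0` it restricts to a linear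
isomorphism from `E_k(λ) ∩ ran(d_k†)` onto `E_{k+1}(λ) ∩ ran(d_k)`, so these spaces have the
same dimension.
-/

open LinearMap Module

noncomputable section

variable {V : ℕ → Type}
  [∀ k, NormedAddCommGroup (V k)] [∀ k, InnerProductSpace ℂ (V k)]
  [∀ k, FiniteDimensional ℂ (V k)]

/-- The Laplace-type operator `Δ_k = d_k† d_k + d_{k−1} d_{k−1}†` (with `d_{−1} = 0`). -/
noncomputable def Lap (d : ∀ k, V k →ₗ[ℂ] V (k + 1)) : ∀ k, V k →ₗ[ℂ] V k
  | 0 => adjoint (d 0) ∘ₗ d 0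
  | (k + 1) => adjoint (d (k + 1)) ∘ₗ d (k + 1) + d k ∘ₗ adjoint (d k)

/-!
Write `δ` for the adjoint of `d`. The argument is pure algebra with the relations `d ∘ d = 0` and
`δ ∘ δ = 0`, which make `Δ` act as `δ ∘ d` on `range δ` and as `d ∘ δ` on `range d`. On the
`μ`-eigenvectors in these ranges `δ ∘ d` and `d ∘ δ` are therefore multiplication by `μ`, and when
`μ` is a unit, `μ⁻¹ • δ` is the inverse of `d`. Moreover `d ∘ Δ = d ∘ δ ∘ d = Δ ∘ d`, so `d`
preserves eigenspaces.
-/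

universe v w

section Eigenspace

variable {R M N : Type*} [CommRing R] [AddCommGroup M] [Module R M] [AddCommGroup N] [Module R N]
  {d : M →ₗ[R] N} {δ : N →ₗ[R] M} {L : End R M} {L' : End R N}

theorem mapsTo_eigenspace_of_comp_eq (h : d ∘ₗ L = L' ∘ₗ d) (μ : R) :
    Set.MapsTo d (End.eigenspace L μ) (End.eigenspace L' μ) := by
  intro x hx
  rw [SetLike.mem_coe, End.mem_eigenspace_iff] at hx ⊢
  calc L' (d x) = d (L x) := (LinearMap.congr_fun h x).symm
    _ = μ • d x := by rw [hx, map_smul]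

theorem apply_apply_eq_smul_of_mem_eigenspace_inf_range (hL : L ∘ₗ δ = δ ∘ₗ d ∘ₗ δ) {μ : R} {x : M}
    (hx : x ∈ End.eigenspace L μ ⊓ range δ) : δ (d x) = μ • x := by
  obtain ⟨hLx, y, rfl⟩ := hx
  calc δ (d (δ y)) = L (δ y) := (LinearMap.congr_fun hL y).symm
    _ = μ • δ y := End.mem_eigenspace_iff.mp hLx

theorem mapsTo_eigenspace_inf_range (hL : L ∘ₗ δ = δ ∘ₗ d ∘ₗ δ) (hL' : L' ∘ₗ d = d ∘ₗ δ ∘ₗ d)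
    (μ : R) :
    Set.MapsTo d ↑(End.eigenspace L μ ⊓ range δ) ↑(End.eigenspace L' μ ⊓ range d) := by
  intro x hx
  refine ⟨End.mem_eigenspace_iff.mpr ?_, mem_range_self d x⟩
  calc L' (d x) = d (δ (d x)) := LinearMap.congr_fun hL' x
    _ = μ • d x := by rw [apply_apply_eq_smul_of_mem_eigenspace_inf_range hL hx, map_smul]

theorem bijOn_eigenspace_inf_range (hL : L ∘ₗ δ = δ ∘ₗ d ∘ₗ δ) (hL' : L' ∘ₗ d = d ∘ₗ δ ∘ₗ d)
    {μ : R} (hμ : IsUnit μ) :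
    Set.BijOn d ↑(End.eigenspace L μ ⊓ range δ) ↑(End.eigenspace L' μ ⊓ range d) := by
  -- The hypotheses are exchanged by swapping `(d, L)` with `(δ, L')`.
  obtain ⟨u, rfl⟩ := hμ
  have left_inv : Set.LeftInvOn (u⁻¹ • δ) d ↑(End.eigenspace L (u : R) ⊓ range δ) := fun x hx ↦ by
    rw [LinearMap.smul_apply, apply_apply_eq_smul_of_mem_eigenspace_inf_range hL hx,
      ← Units.smul_def, inv_smul_smul]
  have right_inv : Set.RightInvOn (u⁻¹ • δ) d ↑(End.eigenspace L' (u : R) ⊓ range d) :=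
    fun y hy ↦ by
      rw [LinearMap.smul_apply, Units.smul_def, map_smul,
        apply_apply_eq_smul_of_mem_eigenspace_inf_range hL' hy, ← Units.smul_def,
        ← Units.smul_def, inv_smul_smul]
  exact Set.InvOn.bijOn ⟨left_inv, right_inv⟩ (mapsTo_eigenspace_inf_range hL hL' _)
    fun y hy ↦ Submodule.smul_mem _ _ (mapsTo_eigenspace_inf_range hL' hL _ hy)

end Eigenspace

theorem lift_rank_eq_of_bijOn {R : Type*} {M : Type v} {N : Type w} [Semiring R]
    [AddCommMonoid M] [Module R M] [AddCommMonoid N] [Module R N] {f : M →ₗ[R] N}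
    {p : Submodule R M} {q : Submodule R N} (h : Set.BijOn f p q) :
    Cardinal.lift.{w} (Module.rank R p) = Cardinal.lift.{v} (Module.rank R q) :=
  (LinearEquiv.ofBijective (f.restrict h.mapsTo) h.bijective).lift_rank_eq

section HodgeLaplacian

variable {R : Type*} [Semiring R] {C : ℕ → Type*}
  [∀ k, AddCommMonoid (C k)] [∀ k, Module R (C k)]
  {d : ∀ k, C k →ₗ[R] C (k + 1)} {δ : ∀ k, C (k + 1) →ₗ[R] C k}

/-- The Hodge Laplacian `δ_k d_k + d_{k-1} δ_{k-1}` of a differential `d` and a codifferential `δ`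
on a graded module, with `d_{-1} = 0` and `δ_{-1} = 0`. The codifferential is an arbitrary family of
maps of degree `-1`; taking adjoints for `δ` gives `Lap`. -/
def hodgeLaplacian (d : ∀ k, C k →ₗ[R] C (k + 1)) (δ : ∀ k, C (k + 1) →ₗ[R] C k) : ∀ k, End R (C k)
  | 0 => δ 0 ∘ₗ d 0
  | k + 1 => δ (k + 1) ∘ₗ d (k + 1) + d k ∘ₗ δ k

theorem hodgeLaplacian_succ_comp_differential (hdd : ∀ k, d (k + 1) ∘ₗ d k = 0) (k : ℕ) :
    hodgeLaplacian d δ (k + 1) ∘ₗ d k = d k ∘ₗ δ k ∘ₗ d k := by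
  rw [hodgeLaplacian, add_comp, comp_assoc, hdd, comp_zero, zero_add, comp_assoc]

theorem differential_comp_hodgeLaplacian (hdd : ∀ k, d (k + 1) ∘ₗ d k = 0) (k : ℕ) :
    d k ∘ₗ hodgeLaplacian d δ k = d k ∘ₗ δ k ∘ₗ d k := by
  cases k with
  | zero => rfl
  | succ k => rw [hodgeLaplacian, comp_add, ← comp_assoc (δ k), hdd, zero_comp, add_zero]

theorem hodgeLaplacian_comp_codifferential (hδδ : ∀ k, δ k ∘ₗ δ (k + 1) = 0) (k : ℕ) :
    hodgeLaplacian d δ k ∘ₗ δ k = δ k ∘ₗ d k ∘ₗ δ k := by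
  cases k with
  | zero => rfl
  | succ k =>
    rw [hodgeLaplacian, add_comp, comp_assoc, comp_assoc _ _ (d k), hδδ, comp_zero, add_zero]

end HodgeLaplacian

theorem eigenspace_isomorphism_general {R : Type*} [CommRing R] {C : ℕ → Type*}
    [∀ k, AddCommGroup (C k)] [∀ k, Module R (C k)]
    {d : ∀ k, C k →ₗ[R] C (k + 1)} {δ : ∀ k, C (k + 1) →ₗ[R] C k}
    (hdd : ∀ k, d (k + 1) ∘ₗ d k = 0) (hδδ : ∀ k, δ k ∘ₗ δ (k + 1) = 0) (k : ℕ) (μ : R) :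
    Set.MapsTo (d k) (End.eigenspace (hodgeLaplacian d δ k) μ)
      (End.eigenspace (hodgeLaplacian d δ (k + 1)) μ) ∧
    (IsUnit μ →
      Set.BijOn (d k) ↑(End.eigenspace (hodgeLaplacian d δ k) μ ⊓ range (δ k))
        ↑(End.eigenspace (hodgeLaplacian d δ (k + 1)) μ ⊓ range (d k)) ∧
      Module.rank R ↥(End.eigenspace (hodgeLaplacian d δ k) μ ⊓ range (δ k)) =
        Module.rank R ↥(End.eigenspace (hodgeLaplacian d δ (k + 1)) μ ⊓ range (d k))) := by
  have hd := hodgeLaplacian_succ_comp_differential (δ := δ) hdd k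
  have hδ := hodgeLaplacian_comp_codifferential (d := d) hδδ k
  have intertwine := (differential_comp_hodgeLaplacian hdd k).trans hd.symm
  refine ⟨mapsTo_eigenspace_of_comp_eq intertwine μ, fun hμ ↦ ?_⟩
  have bijOn := bijOn_eigenspace_inf_range hδ hd hμ
  exact ⟨bijOn, Cardinal.lift_inj.mp (lift_rank_eq_of_bijOn bijOn)⟩

theorem Lap_eq_hodgeLaplacian (d : ∀ k, V k →ₗ[ℂ] V (k + 1)) :
    Lap d = hodgeLaplacian d fun k ↦ adjoint (d k) := by
  funext k
  cases k <;> rfl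

theorem adjoint_comp_adjoint_eq_zero {𝕜 E F G : Type*} [RCLike 𝕜]
    [NormedAddCommGroup E] [InnerProductSpace 𝕜 E] [FiniteDimensional 𝕜 E]
    [NormedAddCommGroup F] [InnerProductSpace 𝕜 F] [FiniteDimensional 𝕜 F]
    [NormedAddCommGroup G] [InnerProductSpace 𝕜 G] [FiniteDimensional 𝕜 G]
    {f : E →ₗ[𝕜] F} {g : F →ₗ[𝕜] G} (h : g ∘ₗ f = 0) : adjoint f ∘ₗ adjoint g = 0 := by
  rw [← adjoint_comp, h, map_zero]

theorem eigenspace_isomorphism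
    (n : ℕ) (d : ∀ k, V k →ₗ[ℂ] V (k + 1))
    (hdd : ∀ k, (d (k + 1)).comp (d k) = 0) (hn : d n = 0)
    (k : ℕ) (lam : ℝ) :
    (∀ x ∈ Module.End.eigenspace (Lap d k) (lam : ℂ),
        d k x ∈ Module.End.eigenspace (Lap d (k + 1)) (lam : ℂ)) ∧
    (lam ≠ 0 →
      Set.BijOn (d k)
        ((Module.End.eigenspace (Lap d k) (lam : ℂ) ⊓
            LinearMap.range (adjoint (d k)) : Submodule ℂ (V k)) : Set (V k))
        ((Module.End.eigenspace (Lap d (k + 1)) (lam : ℂ) ⊓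
            LinearMap.range (d k) : Submodule ℂ (V (k + 1))) : Set (V (k + 1))) ∧
      finrank ℂ
          (Module.End.eigenspace (Lap d k) (lam : ℂ) ⊓
            LinearMap.range (adjoint (d k)) : Submodule ℂ (V k))
        = finrank ℂ
          (Module.End.eigenspace (Lap d (k + 1)) (lam : ℂ) ⊓
            LinearMap.range (d k) : Submodule ℂ (V (k + 1)))) := by
  rw [Lap_eq_hodgeLaplacian]
  have h := eigenspace_isomorphism_general hdd (fun k ↦ adjoint_comp_adjoint_eq_zero (hdd k)) k lam
  refine h.imp_right fun h_iso hlam ↦ ?_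
  have hunit : IsUnit (lam : ℂ) := by simpa using hlam
  exact (h_iso hunit).imp_right (congrArg Cardinal.toNat)
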